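/- Let U ⊆ ℝ³ be open and let α, β, δ, ε, ζ be smooth real-valued functions on U with β and ζ nowhere zero, satisfying the contact system (S1) α₁ = 0, (S2) βδ₁ = αε₁, (S3) β(αε − δβ)ζ₂ + (αβ₃ − βα₃)ζ² + (β²δ₂ − αβε₂ + αεβ₂ − βεα₂ − 2β)ζ = 0, (S4) β₁ = 0, (S5) ζ₁ = 0. Set F := δ − αε/β, B := [[α, β, 0], [δ, ε, ζ], [1, 0, 0]], G := B⁻¹(B⁻¹)ᵀ (a smooth field of symmetric positive definite matrices on U), and consider the frame e₁ = (α, β, 0), e₂ = (δ, ε, ζ), e₃ = (1, 0, 0) as vector fields on U. Define the 1-form η(X) := Xᵀ G e₃ (explicitly η = dx¹ − (α/β)dx² − (F/ζ)dx³), and at each point the linear map φ : ℝ³ → ℝ³ determined by φe₁ = e₂, φe₂ = −e₁, φe₃ = 0. Then at every point of U: (i) the frame is G-orthonormal, e_αᵀ G e_β = δ_{αβ}; (ii) η(e₃) = 1; (iii) φ²X = −X + η(X)e₃ for all X ∈ ℝ³; (iv) (φX)ᵀ G (φY) = Xᵀ G Y − η(X)η(Y) for all X, Y ∈ ℝ³;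 (v) (1/2)(∂ᵢη(∂ⱼ) − ∂ⱼη(∂ᵢ)) = ∂ᵢᵀ G (φ∂ⱼ) for all i, j ∈ {1,2,3}, i.e. with the convention dη(X,Y) = (1/2)(Xη(Y) − Yη(X) − η([X,Y])) one has dη(X,Y) = G(X, φY). Hence (η, φ, ξ := e₃, G) is a contact metric structure on U. -/

import Mathlib

open Matrix

/-- Partial derivative `∂f/∂xⁱ`. -/
noncomputable def pd (i : Fin 3) (f : (Fin 3 → ℝ) → ℝ) (p : Fin 3 → ℝ) : ℝ :=
  fderiv ℝ f p (Pi.single i 1)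

/-! Let `θ⁰, θ¹, θ²` be the coframe dual to the rows `e₁, e₂, e₃` of `B`. The map `φ` acts on
components by `(θ⁰, θ¹, θ²) ↦ (-θ¹, θ⁰, 0)`, while `G` becomes the standard dot product and `η`
becomes `θ²`; hence the algebraic identities hold for any frame, and `G(X, φY) = (θ¹ ∧ θ⁰)(X, Y)`,
where `∧` carries no factor `1/2`. Explicitly `η = dx¹ - (α/β) dx² - (F/ζ) dx³`, and the contact
system gives `∂₁(α/β) = ∂₁(F/ζ) = 0` and `∂₂(F/ζ) - ∂₃(α/β) = 2/(βζ)`, which together amount to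
`dη = θ¹ ∧ θ⁰`. -/

section Frame

variable {n R : Type*} [Fintype n] [DecidableEq n] [CommRing R] {B : Matrix n n R}

/-- The matrix of the bilinear form for which the rows of an invertible `B` are an orthonormal
frame. -/
noncomputable def frameMetric (B : Matrix n n R) : Matrix n n R :=
  B⁻¹ * B⁻¹ᵀ

/-- The components of `X` in the frame formed by the rows of an invertible `B`; the `i`-th
component is the `i`-th form of the dual coframe, evaluated at `X`. -/
noncomputable def coframe (B : Matrix n n R) (X : n → R) : n → R :=
  X ᵥ* B⁻¹

lemma isSymm_frameMetric (B : Matrix n n R) : (frameMetric B).IsSymm :=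
  isSymm_mul_transpose_self B⁻¹

lemma posDef_frameMetric {B : Matrix n n ℝ} (hB : IsUnit B.det) : (frameMetric B).PosDef := by
  have hinj : Function.Injective B⁻¹.vecMul :=
    vecMul_injective_of_isUnit (isUnit_nonsing_inv_iff.2 ((isUnit_iff_isUnit_det B).2 hB))
  simpa only [frameMetric, conjTranspose_eq_transpose_of_trivial] using
    PosDef.mul_conjTranspose_self B⁻¹ hinj

lemma dotProduct_frameMetric_mulVec (B : Matrix n n R) (X Y : n → R) :
    X ⬝ᵥ (frameMetric B *ᵥ Y) = coframe B X ⬝ᵥ coframe B Y := by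
  rw [frameMetric, ← mulVec_mulVec, dotProduct_mulVec, mulVec_transpose, coframe, coframe]

lemma coframe_vecMul (hB : IsUnit B.det) (c : n → R) : coframe B (c ᵥ* B) = c := by
  rw [coframe, vecMul_vecMul, mul_nonsing_inv B hB, vecMul_one]

lemma vecMul_coframe (hB : IsUnit B.det) (X : n → R) : coframe B X ᵥ* B = X := by
  rw [coframe, vecMul_vecMul, nonsing_inv_mul B hB, vecMul_one]

lemma coframe_injective (hB : IsUnit B.det) : Function.Injective (coframe B) :=
  Function.LeftInverse.injective (g := (· ᵥ* B)) (vecMul_coframe hB)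

lemma coframe_row (hB : IsUnit B.det) (i : n) : coframe B (B i) = Pi.single i 1 := by
  rw [← coframe_vecMul hB (Pi.single i 1), single_one_vecMul, row]

lemma dotProduct_frameMetric_mulVec_row (hB : IsUnit B.det) (X : n → R) (i : n) :
    X ⬝ᵥ (frameMetric B *ᵥ B i) = coframe B X i := by
  rw [dotProduct_frameMetric_mulVec, coframe_row hB, dotProduct_single_one]

lemma row_dotProduct_frameMetric_mulVec_row (hB : IsUnit B.det) (i j : n) :
    B i ⬝ᵥ (frameMetric B *ᵥ B j) = if i = j then 1 else 0 := by
  rw [dotProduct_frameMetric_mulVec_row hB, coframe_row hB, Pi.single_apply]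
  simp only [eq_comm]

end Frame

section QuarterTurn

variable {R : Type*} [CommRing R] {B φ : Matrix (Fin 3) (Fin 3) R}

/-- `φ` is the tensor `e₁ ↦ e₂`, `e₂ ↦ -e₁`, `e₃ ↦ 0` of the frame `e₁, e₂, e₃` formed by the rows
of `B`. -/
def IsFrameQuarterTurn (B φ : Matrix (Fin 3) (Fin 3) R) : Prop :=
  φ *ᵥ B 0 = B 1 ∧ φ *ᵥ B 1 = -B 0 ∧ φ *ᵥ B 2 = 0

namespace IsFrameQuarterTurn

lemma coframe_mulVec (hφ : IsFrameQuarterTurn B φ) (hB : IsUnit B.det) (X : Fin 3 → R) :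
    coframe B (φ *ᵥ X) = ![-coframe B X 1, coframe B X 0, 0] := by
  obtain ⟨h₀, h₁, h₂⟩ := hφ
  have hφX : φ *ᵥ X = ![-coframe B X 1, coframe B X 0, 0] ᵥ* B := by
    conv_lhs => rw [← vecMul_coframe hB X]
    simp only [vecMul_eq_sum, Fin.sum_univ_three, mulVec_add, mulVec_smul, h₀, h₁, h₂]
    simp [add_comm]
  rw [hφX, coframe_vecMul hB]

lemma mulVec_mulVec (hφ : IsFrameQuarterTurn B φ) (hB : IsUnit B.det) (X : Fin 3 → R) :
    φ *ᵥ (φ *ᵥ X) = -X + coframe B X 2 • B 2 := by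
  apply coframe_injective hB
  have hlin : coframe B (-X + coframe B X 2 • B 2) =
      -coframe B X + coframe B X 2 • Pi.single 2 1 := by
    rw [← coframe_row hB]
    simp only [coframe, add_vecMul, neg_vecMul, smul_vecMul]
  rw [hφ.coframe_mulVec hB, hφ.coframe_mulVec hB, hlin]
  ext i
  fin_cases i <;> simp

lemma mulVec_dotProduct_frameMetric_mulVec (hφ : IsFrameQuarterTurn B φ) (hB : IsUnit B.det)
    (X Y : Fin 3 → R) :
    (φ *ᵥ X) ⬝ᵥ (frameMetric B *ᵥ (φ *ᵥ Y)) =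
      X ⬝ᵥ (frameMetric B *ᵥ Y) - coframe B X 2 * coframe B Y 2 := by
  simp only [dotProduct_frameMetric_mulVec, hφ.coframe_mulVec hB, vec3_dotProduct, cons_val]
  ring

lemma dotProduct_frameMetric_mulVec_mulVec (hφ : IsFrameQuarterTurn B φ) (hB : IsUnit B.det)
    (X Y : Fin 3 → R) :
    X ⬝ᵥ (frameMetric B *ᵥ (φ *ᵥ Y)) =
      coframe B X 1 * coframe B Y 0 - coframe B X 0 * coframe B Y 1 := by
  simp only [dotProduct_frameMetric_mulVec, hφ.coframe_mulVec hB, vec3_dotProduct, cons_val]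
  ring

end IsFrameQuarterTurn

end QuarterTurn

section ContactFrame

variable {K : Type*} [Field K] {a b d e z : K}

/-- The frame of the contact system in simplifying coordinates, as the rows of a matrix. -/
def contactFrame (a b d e z : K) : Matrix (Fin 3) (Fin 3) K :=
  !![a, b, 0; d, e, z; 1, 0, 0]

lemma isUnit_det_contactFrame (hb : b ≠ 0) (hz : z ≠ 0) :
    IsUnit (contactFrame a b d e z).det := by
  simp [contactFrame, det_fin_three, hb, hz]

lemma coframe_contactFrame (hb : b ≠ 0) (hz : z ≠ 0) (X : Fin 3 → K) :
    coframe (contactFrame a b d e z) X =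
      ![X 1 / b - e / (b * z) * X 2, X 2 / z, X 0 - a / b * X 1 - (d - a * e / b) / z * X 2] := by
  set c : Fin 3 → K :=
    ![X 1 / b - e / (b * z) * X 2, X 2 / z, X 0 - a / b * X 1 - (d - a * e / b) / z * X 2] with hc
  have hX : c ᵥ* contactFrame a b d e z = X := by
    ext i
    fin_cases i <;> simp [hc, contactFrame, vecMul] <;> field_simp <;> ring
  rw [← coframe_vecMul (isUnit_det_contactFrame hb hz) c, hX]

end ContactFrame

section PartialDerivatives

variable {f g : (Fin 3 → ℝ) → ℝ} {p : Fin 3 → ℝ}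

lemma pd_sub (i : Fin 3) (hf : DifferentiableAt ℝ f p) (hg : DifferentiableAt ℝ g p) :
    pd i (fun q => f q - g q) p = pd i f p - pd i g p := by
  rw [pd, fderiv_fun_sub hf hg, _root_.sub_apply, pd, pd]

lemma pd_mul (i : Fin 3) (hf : DifferentiableAt ℝ f p) (hg : DifferentiableAt ℝ g p) :
    pd i (fun q => f q * g q) p = pd i f p * g p + f p * pd i g p := by
  simp only [pd, fderiv_fun_mul hf hg, _root_.add_apply,
    _root_.smul_apply, smul_eq_mul]
  ring

lemma pd_congr (i : Fin 3) (h : f =ᶠ[nhds p] g) : pd i f p = pd i g p := by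
  rw [pd, h.fderiv_eq, pd]

lemma pd_div (i : Fin 3) (hf : DifferentiableAt ℝ f p) (hg : DifferentiableAt ℝ g p)
    (hg₀ : g p ≠ 0) :
    pd i (fun q => f q / g q) p = (pd i f p * g p - f p * pd i g p) / g p ^ 2 := by
  have hprod : pd i (fun q => f q / g q * g q) p = pd i f p :=
    pd_congr i ((hg.continuousAt.eventually_ne hg₀).mono fun q hq => div_mul_cancel₀ (f q) hq)
  have hdiv : DifferentiableAt ℝ (fun q => f q / g q) p := by fun_prop (disch := exact hg₀)
  rw [pd_mul i hdiv hg] at hprod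
  rw [← hprod]
  field_simp
  ring

lemma pd_const (i : Fin 3) (c : ℝ) (p : Fin 3 → ℝ) : pd i (fun _ => c) p = 0 := by
  simp [pd]

lemma pd_neg (i : Fin 3) (f : (Fin 3 → ℝ) → ℝ) (p : Fin 3 → ℝ) :
    pd i (fun q => -f q) p = -pd i f p := by
  simp [pd]

end PartialDerivatives

/-- The components of `dη` for a field of 1-forms `η`, with the factor `1/2` of Blair's
convention. -/
noncomputable def halfExtDeriv (η : (Fin 3 → ℝ) → Module.Dual ℝ (Fin 3 → ℝ)) (p : Fin 3 → ℝ)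
    (i j : Fin 3) : ℝ :=
  (1 / 2) * (pd i (fun q => η q (Pi.single j 1)) p - pd j (fun q => η q (Pi.single i 1)) p)

lemma halfExtDeriv_swap (η : (Fin 3 → ℝ) → Module.Dual ℝ (Fin 3 → ℝ)) (p : Fin 3 → ℝ)
    (i j : Fin 3) : halfExtDeriv η p i j = -halfExtDeriv η p j i := by
  rw [halfExtDeriv, halfExtDeriv]
  ring

lemma eq_of_skew_of_forall_lt {ι M : Type*} [LinearOrder ι] [AddGroup M] [IsAddTorsionFree M]
    {f g : ι → ι → M} (hf : ∀ i j, f i j = -f j i) (hg : ∀ i j, g i j = -g j i)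
    (hlt : ∀ i j, i < j → f i j = g i j) : f = g := by
  ext i j
  rcases lt_trichotomy i j with hij | rfl | hji
  · exact hlt i j hij
  · rw [self_eq_neg.1 (hf i i), self_eq_neg.1 (hg i i)]
  · rw [hf, hg, hlt j i hji]

/-- `(η, φ, ξ, G)` is a contact metric structure at `p`; `η` is a field of 1-forms because its
derivatives enter, the other tensors are taken at `p` only. -/
structure IsContactMetricAt (η : (Fin 3 → ℝ) → Module.Dual ℝ (Fin 3 → ℝ))
    (φ : Matrix (Fin 3) (Fin 3) ℝ) (ξ : Fin 3 → ℝ) (G : Matrix (Fin 3) (Fin 3) ℝ)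
    (p : Fin 3 → ℝ) : Prop where
  isSymm : G.IsSymm
  posDef : G.PosDef
  form_reeb : η p ξ = 1
  mulVec_mulVec : ∀ X, φ *ᵥ (φ *ᵥ X) = -X + η p X • ξ
  compatible : ∀ X Y, (φ *ᵥ X) ⬝ᵥ (G *ᵥ (φ *ᵥ Y)) = X ⬝ᵥ (G *ᵥ Y) - η p X * η p Y
  halfExtDeriv_eq : ∀ i j,
    halfExtDeriv η p i j = Pi.single i 1 ⬝ᵥ (G *ᵥ (φ *ᵥ Pi.single j 1))

/-- The contact system (S1)–(S5) in simplifying coordinates, at the single point `p`, together with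
the differentiability and nonvanishing that give it meaning there. -/
structure SolvesContactSystemAt (α β δ ε ζ : (Fin 3 → ℝ) → ℝ) (p : Fin 3 → ℝ) : Prop where
  diff_α : DifferentiableAt ℝ α p
  diff_β : DifferentiableAt ℝ β p
  diff_δ : DifferentiableAt ℝ δ p
  diff_ε : DifferentiableAt ℝ ε p
  diff_ζ : DifferentiableAt ℝ ζ p
  β_ne_zero : β p ≠ 0
  ζ_ne_zero : ζ p ≠ 0
  S1 : pd 0 α p = 0
  S2 : β p * pd 0 δ p = α p * pd 0 ε p
  S3 : β p * (α p * ε p - δ p * β p) * pd 1 ζ p +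
      (α p * pd 2 β p - β p * pd 2 α p) * ζ p ^ 2 +
      (β p ^ 2 * pd 1 δ p - α p * β p * pd 1 ε p + α p * ε p * pd 1 β p -
        β p * ε p * pd 1 α p - 2 * β p) * ζ p = 0
  S4 : pd 0 β p = 0
  S5 : pd 0 ζ p = 0

/-- The function `F = δ - αε/β` of the paper. -/
noncomputable def contactF (α β δ ε : (Fin 3 → ℝ) → ℝ) (q : Fin 3 → ℝ) : ℝ :=
  δ q - α q * ε q / β q

/-- The 1-form `η(X) = G(X, e₃)` metrically dual to the last vector of the contact frame. -/
noncomputable def contactForm (α β δ ε ζ : (Fin 3 → ℝ) → ℝ) (q : Fin 3 → ℝ) :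
    Module.Dual ℝ (Fin 3 → ℝ) :=
  (dotProductBilin ℝ ℝ).flip
    (frameMetric (contactFrame (α q) (β q) (δ q) (ε q) (ζ q)) *ᵥ
      contactFrame (α q) (β q) (δ q) (ε q) (ζ q) 2)

section ContactForm

variable {α β δ ε ζ : (Fin 3 → ℝ) → ℝ} {p : Fin 3 → ℝ}

lemma contactForm_eq_coframe (hβ : β p ≠ 0) (hζ : ζ p ≠ 0) (X : Fin 3 → ℝ) :
    contactForm α β δ ε ζ p X = coframe (contactFrame (α p) (β p) (δ p) (ε p) (ζ p)) X 2 :=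
  dotProduct_frameMetric_mulVec_row (isUnit_det_contactFrame hβ hζ) X 2

lemma contactForm_apply (hβ : β p ≠ 0) (hζ : ζ p ≠ 0) (X : Fin 3 → ℝ) :
    contactForm α β δ ε ζ p X =
      X 0 - α p / β p * X 1 - contactF α β δ ε p / ζ p * X 2 := by
  rw [contactForm_eq_coframe hβ hζ, coframe_contactFrame hβ hζ]
  rfl

namespace SolvesContactSystemAt

variable (h : SolvesContactSystemAt α β δ ε ζ p)
include h

lemma differentiableAt_mul_div : DifferentiableAt ℝ (fun q => α q * ε q / β q) p := by
  have := h.diff_α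
  have := h.diff_β
  have := h.diff_ε
  fun_prop (disch := exact h.β_ne_zero)

lemma differentiableAt_contactF : DifferentiableAt ℝ (contactF α β δ ε) p :=
  h.diff_δ.fun_sub h.differentiableAt_mul_div

lemma pd_contactF (i : Fin 3) :
    pd i (contactF α β δ ε) p = pd i δ p -
      ((pd i α p * ε p + α p * pd i ε p) * β p - α p * ε p * pd i β p) / β p ^ 2 := by
  unfold contactF
  rw [pd_sub i h.diff_δ h.differentiableAt_mul_div,
    pd_div i (h.diff_α.fun_mul h.diff_ε) h.diff_β h.β_ne_zero, pd_mul i h.diff_α h.diff_ε]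

lemma pd_zero_α_div_β : pd 0 (fun q => α q / β q) p = 0 := by
  rw [pd_div 0 h.diff_α h.diff_β h.β_ne_zero, h.S1, h.S4]
  ring

lemma pd_zero_contactF_div_ζ : pd 0 (fun q => contactF α β δ ε q / ζ q) p = 0 := by
  have hβ := h.β_ne_zero
  have hF : pd 0 (contactF α β δ ε) p = 0 := by
    rw [h.pd_contactF, h.S1, h.S4]
    field_simp
    linear_combination β p * h.S2
  rw [pd_div 0 h.differentiableAt_contactF h.diff_ζ h.ζ_ne_zero, hF, h.S5]
  ring

lemma pd_one_contactF_div_ζ_sub_pd_two_α_div_β :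
    pd 1 (fun q => contactF α β δ ε q / ζ q) p - pd 2 (fun q => α q / β q) p =
      2 / (β p * ζ p) := by
  have hβ := h.β_ne_zero
  have hζ := h.ζ_ne_zero
  rw [pd_div 1 h.differentiableAt_contactF h.diff_ζ hζ, h.pd_contactF,
    pd_div 2 h.diff_α h.diff_β hβ, contactF]
  field_simp
  linear_combination h.S3

lemma pd_contactForm_single (i j : Fin 3) :
    pd i (fun q => contactForm α β δ ε ζ q (Pi.single j 1)) p =
      ![0, -pd i (fun q => α q / β q) p, -pd i (fun q => contactF α β δ ε q / ζ q) p] j := by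
  have hη : (fun q => contactForm α β δ ε ζ q (Pi.single j 1)) =ᶠ[nhds p]
      fun q => ![1, -(α q / β q), -(contactF α β δ ε q / ζ q)] j := by
    filter_upwards [h.diff_β.continuousAt.eventually_ne h.β_ne_zero,
      h.diff_ζ.continuousAt.eventually_ne h.ζ_ne_zero] with q hβ hζ
    rw [contactForm_apply hβ hζ]
    fin_cases j <;> simp
  rw [pd_congr i hη]
  fin_cases j
  · exact pd_const i 1 p
  · exact pd_neg i _ p
  · exact pd_neg i _ p

lemma halfExtDeriv_contactForm {φ : Matrix (Fin 3) (Fin 3) ℝ}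
    (hφ : IsFrameQuarterTurn (contactFrame (α p) (β p) (δ p) (ε p) (ζ p)) φ) (i j : Fin 3) :
    halfExtDeriv (contactForm α β δ ε ζ) p i j = Pi.single i 1 ⬝ᵥ
      (frameMetric (contactFrame (α p) (β p) (δ p) (ε p) (ζ p)) *ᵥ (φ *ᵥ Pi.single j 1)) := by
  have hB := isUnit_det_contactFrame (a := α p) (d := δ p) (e := ε p) h.β_ne_zero h.ζ_ne_zero
  revert i j
  simp only [← funext_iff]
  refine eq_of_skew_of_forall_lt (halfExtDeriv_swap _ p) (fun i j => ?_) fun i j hij => ?_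
  · simp only [hφ.dotProduct_frameMetric_mulVec_mulVec hB]
    ring
  · rw [halfExtDeriv, h.pd_contactForm_single, h.pd_contactForm_single,
      hφ.dotProduct_frameMetric_mulVec_mulVec hB, coframe_contactFrame h.β_ne_zero h.ζ_ne_zero,
      coframe_contactFrame h.β_ne_zero h.ζ_ne_zero]
    have h₀₁ := h.pd_zero_α_div_β
    have h₀₂ := h.pd_zero_contactF_div_ζ
    have h₁₂ := h.pd_one_contactF_div_ζ_sub_pd_two_α_div_β
    obtain ⟨rfl, rfl⟩ | ⟨rfl, rfl⟩ | ⟨rfl, rfl⟩ :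
        (i = 0 ∧ j = 1) ∨ (i = 0 ∧ j = 2) ∨ (i = 1 ∧ j = 2) := by omega
    · simp [h₀₁]
    · simp [h₀₂]
    · simp only [cons_val, Pi.single_apply, Fin.reduceEq, if_true, if_false]
      linear_combination (-1 / 2) * h₁₂

end SolvesContactSystemAt

end ContactForm

theorem stmt_11_general {α β δ ε ζ : (Fin 3 → ℝ) → ℝ} {p : Fin 3 → ℝ}
    (h : SolvesContactSystemAt α β δ ε ζ p) {B φ : Matrix (Fin 3) (Fin 3) ℝ}
    (hB : B = contactFrame (α p) (β p) (δ p) (ε p) (ζ p)) (hφ : IsFrameQuarterTurn B φ) :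
    IsContactMetricAt (contactForm α β δ ε ζ) φ (B 2) (frameMetric B) p ∧
      (∀ X, contactForm α β δ ε ζ p X =
        X 0 - α p / β p * X 1 - contactF α β δ ε p / ζ p * X 2) ∧
      ∀ i j, B i ⬝ᵥ (frameMetric B *ᵥ B j) = if i = j then 1 else 0 := by
  subst hB
  have hβ := h.β_ne_zero
  have hζ := h.ζ_ne_zero
  have hB := isUnit_det_contactFrame (a := α p) (d := δ p) (e := ε p) hβ hζ
  refine ⟨⟨isSymm_frameMetric _, posDef_frameMetric hB, ?_, fun X => ?_, fun X Y => ?_,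
    h.halfExtDeriv_contactForm hφ⟩, contactForm_apply hβ hζ,
    row_dotProduct_frameMetric_mulVec_row hB⟩
  · rw [contactForm_eq_coframe hβ hζ, coframe_row hB, Pi.single_eq_same]
  · rw [contactForm_eq_coframe hβ hζ, hφ.mulVec_mulVec hB]
  · rw [contactForm_eq_coframe hβ hζ, contactForm_eq_coframe hβ hζ,
      hφ.mulVec_dotProduct_frameMetric_mulVec hB]

/-- if `α, β, δ, ε, ζ` solve the contact system (S1)–(S5) on `U`
(with `β, ζ` nowhere zero), set `F := δ − αε/β`, `B := [[α,β,0],[δ,ε,ζ],[1,0,0]]`,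
`G := B⁻¹(B⁻¹)ᵀ`, frame `e₁ = (α,β,0)`, `e₂ = (δ,ε,ζ)`, `e₃ = (1,0,0)`,
`η(X) := Xᵀ G e₃`, and let `φ` be the field of linear maps determined by
`φe₁ = e₂`, `φe₂ = −e₁`, `φe₃ = 0`. Then at every `p ∈ U`: `G p` is symmetric positive
definite; `η = dx¹ − (α/β)dx² − (F/ζ)dx³` explicitly; the frame is `G`-orthonormal;
`η(e₃) = 1`; `φ² = −I + η ⊗ e₃`; `G(φX,φY) = G(X,Y) − η(X)η(Y)`; and
`(1/2)(∂ᵢη(∂ⱼ) − ∂ⱼη(∂ᵢ)) = G(∂ᵢ, φ∂ⱼ)`, i.e. `dη(X,Y) = G(X,φY)` with Blair's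
convention. Hence `(η, φ, ξ := e₃, G)` is a contact metric structure on `U`.
(Coordinates and indices `1,2,3` of the paper are `0,1,2` here.) -/
theorem stmt_11 (U : Set (Fin 3 → ℝ)) (hU : IsOpen U)
    (α β δ ε ζ : (Fin 3 → ℝ) → ℝ)
    (hα : ContDiffOn ℝ (⊤ : ℕ∞) α U) (hβs : ContDiffOn ℝ (⊤ : ℕ∞) β U)
    (hδ : ContDiffOn ℝ (⊤ : ℕ∞) δ U) (hε : ContDiffOn ℝ (⊤ : ℕ∞) ε U)
    (hζs : ContDiffOn ℝ (⊤ : ℕ∞) ζ U)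
    (hβ : ∀ p ∈ U, β p ≠ 0) (hζ : ∀ p ∈ U, ζ p ≠ 0)
    (hS1 : ∀ p ∈ U, pd 0 α p = 0)
    (hS2 : ∀ p ∈ U, β p * pd 0 δ p = α p * pd 0 ε p)
    (hS3 : ∀ p ∈ U,
      β p * (α p * ε p - δ p * β p) * pd 1 ζ p +
        (α p * pd 2 β p - β p * pd 2 α p) * ζ p ^ 2 +
        (β p ^ 2 * pd 1 δ p - α p * β p * pd 1 ε p + α p * ε p * pd 1 β p -
          β p * ε p * pd 1 α p - 2 * β p) * ζ p = 0)
    (hS4 : ∀ p ∈ U, pd 0 β p = 0)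
    (hS5 : ∀ p ∈ U, pd 0 ζ p = 0)
    (F : (Fin 3 → ℝ) → ℝ) (hF : F = fun p => δ p - α p * ε p / β p)
    (B : (Fin 3 → ℝ) → Matrix (Fin 3) (Fin 3) ℝ)
    (hB : B = fun p => !![α p, β p, 0; δ p, ε p, ζ p; 1, 0, 0])
    (G : (Fin 3 → ℝ) → Matrix (Fin 3) (Fin 3) ℝ)
    (hG : G = fun p => (B p)⁻¹ * ((B p)⁻¹)ᵀ)
    (e : Fin 3 → (Fin 3 → ℝ) → (Fin 3 → ℝ))
    (he : e = ![fun p => ![α p, β p, 0], fun p => ![δ p, ε p, ζ p], fun _ => ![1, 0, 0]])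
    (η : (Fin 3 → ℝ) → (Fin 3 → ℝ) → ℝ)
    (hη : η = fun p X => X ⬝ᵥ (G p *ᵥ e 2 p))
    (φ : (Fin 3 → ℝ) → Matrix (Fin 3) (Fin 3) ℝ)
    (hφ : ∀ p ∈ U, φ p *ᵥ e 0 p = e 1 p ∧ φ p *ᵥ e 1 p = -(e 0 p) ∧ φ p *ᵥ e 2 p = 0) :
    ∀ p ∈ U,
      ((G p).IsSymm ∧ (G p).PosDef) ∧
      (∀ X : Fin 3 → ℝ, η p X = X 0 - (α p / β p) * X 1 - (F p / ζ p) * X 2) ∧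
      (∀ a b : Fin 3, e a p ⬝ᵥ (G p *ᵥ e b p) = if a = b then 1 else 0) ∧
      η p (e 2 p) = 1 ∧
      (∀ X : Fin 3 → ℝ, φ p *ᵥ (φ p *ᵥ X) = -X + η p X • e 2 p) ∧
      (∀ X Y : Fin 3 → ℝ,
        (φ p *ᵥ X) ⬝ᵥ (G p *ᵥ (φ p *ᵥ Y)) = X ⬝ᵥ (G p *ᵥ Y) - η p X * η p Y) ∧
      (∀ i j : Fin 3,
        (1 / 2) * (pd i (fun q => η q (Pi.single j 1)) p -
            pd j (fun q => η q (Pi.single i 1)) p) =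
          Pi.single i 1 ⬝ᵥ (G p *ᵥ (φ p *ᵥ Pi.single j 1))) := by
  intro p hp
  have hrow (a : Fin 3) : e a p = contactFrame (α p) (β p) (δ p) (ε p) (ζ p) a := by
    rw [he]
    fin_cases a <;> rfl
  subst hF hB hG he hη
  have hdiff {f : (Fin 3 → ℝ) → ℝ} (hf : ContDiffOn ℝ (⊤ : ℕ∞) f U) : DifferentiableAt ℝ f p :=
    (hf.contDiffAt (hU.mem_nhds hp)).differentiableAt (by simp)
  have hsys : SolvesContactSystemAt α β δ ε ζ p :=
    ⟨hdiff hα, hdiff hβs, hdiff hδ, hdiff hε, hdiff hζs, hβ p hp, hζ p hp,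
      hS1 p hp, hS2 p hp, hS3 p hp, hS4 p hp, hS5 p hp⟩
  obtain ⟨hcontact, hη, horth⟩ := stmt_11_general hsys rfl (hφ p hp)
  refine ⟨⟨hcontact.isSymm, hcontact.posDef⟩, hη, fun a b => ?_, hcontact.form_reeb,
    hcontact.mulVec_mulVec, hcontact.compatible, hcontact.halfExtDeriv_eq⟩
  rw [hrow a, hrow b]
  exact horth a b
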